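/- arXiv:1509.04188 — 2 statements merged into one kernel-verified Lean document; each statement's English description precedes it below -/
import Mathlib

section
/- Let d ≥ 1, K > 0, η > 0, and let (α_k)_{k≥0} be a sequence of positive integers with α_k = o(α_{k+1}) as k → ∞. Then for Lebesgue-almost every θ ∈ [0,1] there exists a constant C = C(θ, η, d, K) > 0 such that for all integers V ≥ 1, all m ∈ ⟦0, K·V⟧^d \ {0} and all q ∈ D₁^{(d)}(V): |Σ_{k=V+1}^{2V} e(m·(k·q − α_k·θ·1_d))| ≤ C·V^{1/2+η}. -/
/-!
Put `M = ∑ mᵢ`, an integer between `1` and `d K V`, and `β = m · q`, whose denominator divides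
`den q ≤ V²`. The sum equals `∑ e(k β) e(-α_k M θ)`, and depends on `β` only modulo `1`, so for
given `V` there are only `O(V ^ 5)` different functions of `θ` to control.

Each of them behaves like a sum of independent random phases. Once `α_{k+1} ≥ (p + 1) α_k`,
expansions `∑ x_k α_k` with digits `x_k ≤ p` are unique (`digits_unique`). The `p`-th power of the
sum is therefore a trigonometric polynomial in `θ` with distinct frequencies and multinomial
coefficients in absolute value, and Parseval's identity bounds the `2p`-th moment on `[0, 1]` by
`∑ multinomial² ≤ p! ∑ multinomial = p! V ^ p` (`moment_bound`).

Summing these moments over the `O(V ^ 5)` parameters, with weight `V ^ (-(p + 7))`, and then over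
`V` gives a convergent series, so for almost every `θ` every sum has modulus at most
`C V ^ (1 / 2 + 7 / (2 p))` (`ae_bound_rational_phase`). It remains to take `p ≥ 7 / (2 η)`.
-/

open scoped BigOperators

/-- `e(x) = exp(2πix)`. -/
noncomputable def eTwoPi (x : ℝ) : ℂ := Complex.exp (2 * Real.pi * Complex.I * x)

/-- `den(q)`: the least positive integer `b` with `b q ∈ ℤ^d`, i.e. the lcm of
the denominators of the coordinates of `q`. -/
def denVec {d : ℕ} (q : Fin d → ℚ) : ℕ :=
  Finset.univ.lcm fun i => (q i).den

/-- `D₁^{(d)}(V) = {q ∈ [-1,1]^d ∩ ℚ^d : den(q) ≤ V²}`. -/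
def D1 (d : ℕ) (V : ℝ) : Set (Fin d → ℚ) :=
  {q | (∀ i, |q i| ≤ 1) ∧ (denVec q : ℝ) ≤ V ^ 2}

/-! ### The additive character and Parseval -/

lemma eTwoPi_add (x y : ℝ) : eTwoPi (x + y) = eTwoPi x * eTwoPi y := by
  simp only [eTwoPi, ← Complex.exp_add]
  congr 1
  push_cast
  ring

lemma eTwoPi_zero : eTwoPi 0 = 1 := by simp [eTwoPi]

lemma eTwoPi_int (n : ℤ) : eTwoPi n = 1 := by
  rw [eTwoPi, Complex.exp_eq_one_iff]
  exact ⟨n, by push_cast; ring⟩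

lemma norm_eTwoPi (x : ℝ) : ‖eTwoPi x‖ = 1 := by
  have h : (2 * Real.pi * Complex.I * x : ℂ) = ((2 * Real.pi * x : ℝ) : ℂ) * Complex.I := by
    push_cast
    ring
  rw [eTwoPi, h, Complex.norm_exp_ofReal_mul_I]

lemma conj_eTwoPi (x : ℝ) : (starRingEnd ℂ) (eTwoPi x) = eTwoPi (-x) := by
  simp only [eTwoPi, ← Complex.exp_conj]
  congr 1
  simp [Complex.conj_ofNat]

lemma continuous_eTwoPi : Continuous eTwoPi := by
  unfold eTwoPi
  fun_prop

lemma eTwoPi_nat_mul (n : ℕ) (x : ℝ) : eTwoPi (n * x) = eTwoPi x ^ n := by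
  simp only [eTwoPi, ← Complex.exp_nat_mul]
  congr 1
  push_cast
  ring

lemma eTwoPi_sum {ι : Type*} (s : Finset ι) (x : ι → ℝ) :
    eTwoPi (∑ i ∈ s, x i) = ∏ i ∈ s, eTwoPi (x i) := by
  classical
  induction s using Finset.induction_on with
  | empty => simp [eTwoPi_zero]
  | insert i s hi ih => rw [Finset.sum_insert hi, Finset.prod_insert hi, eTwoPi_add, ih]

lemma integral_eTwoPi_int (n : ℤ) :
    ∫ θ in (0 : ℝ)..1, eTwoPi (n * θ) = if n = 0 then 1 else 0 := by
  split_ifs with h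
  · simp [h, eTwoPi_zero]
  · have hc : (2 * Real.pi * Complex.I * n : ℂ) ≠ 0 := by
      simp [h, Real.pi_ne_zero]
    have h1 : ∀ θ : ℝ, eTwoPi (n * θ) = Complex.exp ((2 * Real.pi * Complex.I * n : ℂ) * θ) := by
      intro θ
      rw [eTwoPi]
      congr 1
      push_cast
      ring
    have h2 : Complex.exp (2 * Real.pi * Complex.I * n : ℂ) = 1 := by
      rw [Complex.exp_eq_one_iff]
      exact ⟨n, by ring⟩
    simp_rw [h1]
    rw [integral_exp_mul_complex hc]
    simp [h2]

/-- Parseval's identity for a trigonometric polynomial with distinct integer frequencies. -/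
lemma integral_norm_sq_trigPoly {ι : Type*} (T : Finset ι) (a : ι → ℂ) (n : ι → ℤ)
    (hn : Set.InjOn n T) :
    ∫ θ in (0 : ℝ)..1, ‖∑ i ∈ T, a i * eTwoPi (n i * θ)‖ ^ 2 = ∑ i ∈ T, ‖a i‖ ^ 2 := by
  classical
  have hpt : ∀ θ : ℝ, (((‖∑ i ∈ T, a i * eTwoPi (n i * θ)‖ ^ 2 : ℝ)) : ℂ) =
      ∑ i ∈ T, ∑ j ∈ T, a i * (starRingEnd ℂ) (a j) * eTwoPi ((n i - n j : ℤ) * θ) := by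
    intro θ
    push_cast
    rw [← Complex.mul_conj', map_sum, Finset.sum_mul_sum]
    refine Finset.sum_congr rfl fun i _ => Finset.sum_congr rfl fun j _ => ?_
    have : ((n i - n j : ℤ) * θ : ℝ) = n i * θ + -(n j * θ) := by push_cast; ring
    simp only [Int.cast_sub] at this ⊢
    rw [this, eTwoPi_add, map_mul, conj_eTwoPi]
    ring
  have hc : ∀ l : ℤ, Continuous fun θ : ℝ => eTwoPi (l * θ) := fun l =>
    continuous_eTwoPi.comp (by fun_prop)
  have hc' : ∀ i j : ι, Continuous fun θ : ℝ =>
      a i * (starRingEnd ℂ) (a j) * eTwoPi ((n i - n j : ℤ) * θ) := fun i j =>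
    continuous_const.mul (hc (n i - n j))
  have key : ((∫ θ in (0 : ℝ)..1, ‖∑ i ∈ T, a i * eTwoPi (n i * θ)‖ ^ 2 : ℝ) : ℂ) =
      ((∑ i ∈ T, ‖a i‖ ^ 2 : ℝ) : ℂ) := by
    rw [← intervalIntegral.integral_ofReal]
    simp_rw [hpt]
    rw [intervalIntegral.integral_finsetSum]
    · rw [Complex.ofReal_sum]
      refine Finset.sum_congr rfl fun i hi => ?_
      rw [intervalIntegral.integral_finsetSum]
      · rw [Finset.sum_eq_single i]
        · rw [intervalIntegral.integral_const_mul, integral_eTwoPi_int]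
          simp [Complex.mul_conj']
        · intro j hj hji
          rw [intervalIntegral.integral_const_mul, integral_eTwoPi_int, if_neg, mul_zero]
          intro h
          exact hji (hn hj hi (by omega))
        · exact fun h => absurd hi h
      · intro j _
        exact (hc' i j).intervalIntegrable _ _
    · intro i _
      exact (continuous_finsetSum _ fun j _ => hc' i j).intervalIntegrable _ _
  exact_mod_cast key

/-! ### Unique expansions and moments -/

/-- If `α` grows by a factor at least `p + 1` at each step, sums with digits at most `p` over
indices below `n` stay below `α n`. -/
lemma sum_digits_lt {α : ℕ → ℕ} {p N : ℕ} (hpos : ∀ k, 0 < α k)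
    (hgrow : ∀ k ≥ N, (p + 1) * α k ≤ α (k + 1)) (x : ℕ → ℕ) (hx : ∀ k, x k ≤ p)
    {n : ℕ} (hn : N ≤ n) : ∑ k ∈ Finset.Ico N n, x k * α k < α n := by
  induction n, hn using Nat.le_induction with
  | base => simpa using hpos N
  | succ n hn ih =>
    rw [Finset.sum_Ico_succ_top hn]
    have h1 := hgrow n hn
    have h2 : x n * α n ≤ p * α n := Nat.mul_le_mul_right _ (hx n)
    linarith

/-- Uniqueness of expansions with digits at most `p` in a generalized base `α` growing by a factor
at least `p + 1` at each step. -/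
lemma digits_unique {α : ℕ → ℕ} {p N : ℕ} (hpos : ∀ k, 0 < α k)
    (hgrow : ∀ k ≥ N, (p + 1) * α k ≤ α (k + 1)) (x y : ℕ → ℕ) (hx : ∀ k, x k ≤ p)
    (hy : ∀ k, y k ≤ p) {n : ℕ} (hn : N ≤ n)
    (h : ∑ k ∈ Finset.Ico N n, x k * α k = ∑ k ∈ Finset.Ico N n, y k * α k) :
    ∀ k ∈ Finset.Ico N n, x k = y k := by
  induction n, hn using Nat.le_induction with
  | base => simp
  | succ n hn ih =>
    rw [Finset.sum_Ico_succ_top hn, Finset.sum_Ico_succ_top hn] at h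
    have hA := sum_digits_lt hpos hgrow x hx hn
    have hB := sum_digits_lt hpos hgrow y hy hn
    have hxy : x n = y n := by
      have := congrArg (· / α n) h
      simpa [Nat.add_mul_div_right _ _ (hpos n), Nat.div_eq_of_lt hA, Nat.div_eq_of_lt hB]
        using this
    rw [hxy] at h
    have ih' := ih (Nat.add_right_cancel h)
    intro k hk
    rw [Finset.mem_Ico] at hk
    rcases Nat.lt_succ_iff_lt_or_eq.mp hk.2 with hlt | rfl
    · exact ih' k (Finset.mem_Ico.mpr ⟨hk.1, hlt⟩)
    · exact hxy

/-- The `2p`-th moment of an exponential sum with frequencies growing by a factor at least `p + 1`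
satisfies the same square-root cancellation as for independent random phases: the `p`-th power of
the sum is, by the multinomial theorem, a trigonometric polynomial whose frequencies are pairwise
distinct, so Parseval's identity applies. -/
lemma moment_bound_s6 {α : ℕ → ℕ} {p N n : ℕ} (hpos : ∀ k, 0 < α k)
    (hgrow : ∀ k ≥ N, (p + 1) * α k ≤ α (k + 1)) (hn : N ≤ n) (c : ℕ → ℂ)
    (hc : ∀ k, ‖c k‖ = 1) {M : ℕ} (hM : 1 ≤ M) :
    ∫ θ in (0 : ℝ)..1, ‖∑ k ∈ Finset.Ico N n, c k * eTwoPi (-(α k * M * θ))‖ ^ (2 * p) ≤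
      p.factorial * ((n - N : ℕ) : ℝ) ^ p := by
  classical
  set s := Finset.Ico N n with hs
  set T := s.piAntidiag p with hT
  have hpt : ∀ θ : ℝ, ‖∑ k ∈ s, c k * eTwoPi (-(α k * M * θ))‖ ^ (2 * p) =
      ‖∑ x ∈ T, ((Nat.multinomial s x : ℂ) * ∏ k ∈ s, c k ^ x k) *
        eTwoPi ((-((∑ k ∈ s, x k * α k : ℕ) : ℤ) * M : ℤ) * θ)‖ ^ 2 := by
    intro θ
    rw [mul_comm 2 p, pow_mul, ← norm_pow, Finset.sum_pow_eq_sum_piAntidiag]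
    congr 2
    refine Finset.sum_congr rfl fun x _ => ?_
    rw [mul_assoc]
    congr 1
    simp_rw [mul_pow]
    rw [Finset.prod_mul_distrib]
    congr 1
    simp_rw [← eTwoPi_nat_mul]
    rw [← eTwoPi_sum]
    congr 1
    push_cast
    rw [← Finset.sum_neg_distrib, Finset.sum_mul, Finset.sum_mul]
    exact Finset.sum_congr rfl fun k _ => by ring
  simp_rw [hpt]
  rw [integral_norm_sq_trigPoly]
  · have hcoef : ∀ x : ℕ → ℕ, ‖(Nat.multinomial s x : ℂ) * ∏ k ∈ s, c k ^ x k‖ =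
        Nat.multinomial s x := by
      intro x
      simp [norm_prod, hc]
    simp_rw [hcoef]
    have hsum : ∑ x ∈ T, (Nat.multinomial s x : ℝ) = ((n - N : ℕ) : ℝ) ^ p := by
      have := Finset.sum_pow_eq_sum_piAntidiag s (fun _ => (1 : ℝ)) p
      simp only [one_pow, Finset.prod_const_one, mul_one, Finset.sum_const, nsmul_eq_mul, hs,
        Nat.card_Ico] at this
      exact this.symm
    rw [← hsum, Finset.mul_sum]
    refine Finset.sum_le_sum fun x hx => ?_
    have hle : Nat.multinomial s x ≤ p.factorial := by
      rw [Finset.mem_piAntidiag] at hx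
      rw [Nat.multinomial, hx.1]
      exact Nat.div_le_self _ _
    rw [sq]
    gcongr
  · intro x hx y hy hxy
    have hx' := Finset.mem_piAntidiag.mp (Finset.mem_coe.mp hx)
    have hy' := Finset.mem_piAntidiag.mp (Finset.mem_coe.mp hy)
    have hle : ∀ z : ℕ → ℕ, s.sum z = p ∧ (∀ i, z i ≠ 0 → i ∈ s) → ∀ k, z k ≤ p := by
      intro z hz k
      by_cases hk : k ∈ s
      · rw [← hz.1]
        exact Finset.single_le_sum (fun _ _ => Nat.zero_le _) hk
      · have : z k = 0 := by
          by_contra h0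
          exact hk (hz.2 k h0)
        omega
    have hM0 : (M : ℤ) ≠ 0 := by positivity
    have hsum : ∑ k ∈ s, x k * α k = ∑ k ∈ s, y k * α k := by
      have := mul_right_cancel₀ hM0 hxy
      exact_mod_cast neg_injective this
    have huniq := digits_unique hpos hgrow x y (hle x hx') (hle y hy') hn hsum
    funext k
    by_cases hk : k ∈ s
    · exact huniq k hk
    · have h1 : x k = 0 := by_contra fun h0 => hk (hx'.2 k h0)
      have h2 : y k = 0 := by_contra fun h0 => hk (hy'.2 k h0)
      rw [h1, h2]

/-! ### From moments to almost everywhere bounds -/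

/-- Functions whose integrals are summable are almost everywhere uniformly bounded. -/
lemma ae_bounded_of_summable_integral (f : ℕ → ℝ → ℝ) (hf : ∀ V, Continuous (f V))
    (hf0 : ∀ V θ, 0 ≤ f V θ) (b : ℕ → ℝ) (hb : Summable b)
    (hfb : ∀ V, ∫ θ in (0 : ℝ)..1, f V θ ≤ b V) :
    ∀ᵐ θ ∂(MeasureTheory.volume.restrict (Set.Icc (0 : ℝ) 1)), ∃ C : ℝ, ∀ V, f V θ ≤ C := by
  set μ := MeasureTheory.volume.restrict (Set.Icc (0 : ℝ) 1)
  have hmeas : ∀ V, Measurable fun θ => ENNReal.ofReal (f V θ) := fun V =>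
    (hf V).measurable.ennreal_ofReal
  have hint : ∀ V, ∫⁻ θ, ENNReal.ofReal (f V θ) ∂μ ≤ ENNReal.ofReal (b V) := by
    intro V
    rw [← MeasureTheory.ofReal_integral_eq_lintegral_ofReal]
    · refine ENNReal.ofReal_le_ofReal ?_
      have := hfb V
      rwa [intervalIntegral.integral_of_le zero_le_one,
        ← MeasureTheory.integral_Icc_eq_integral_Ioc] at this
    · exact (hf V).continuousOn.integrableOn_compact isCompact_Icc
    · exact Filter.Eventually.of_forall (hf0 V)
  have hfin : ∫⁻ θ, ∑' V, ENNReal.ofReal (f V θ) ∂μ ≠ ⊤ := by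
    rw [MeasureTheory.lintegral_tsum fun V => (hmeas V).aemeasurable]
    refine ne_top_of_le_ne_top ?_ (ENNReal.tsum_le_tsum hint)
    exact hb.tsum_ofReal_ne_top
  filter_upwards [MeasureTheory.ae_lt_top (Measurable.tsum hmeas) hfin] with θ hθ
  refine ⟨(∑' V, ENNReal.ofReal (f V θ)).toReal, fun V => ?_⟩
  rw [← ENNReal.ofReal_le_iff_le_toReal hθ.ne]
  exact ENNReal.le_tsum V

/-- The moment bound over dyadic blocks, for all `V`: the finitely many blocks that start before
the growth condition holds are absorbed in the constant. -/
lemma exists_moment_const (α : ℕ → ℕ) (hαpos : ∀ k, 0 < α k)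
    (hα : ∀ δ : ℝ, 0 < δ → ∃ k₀ : ℕ, ∀ k ≥ k₀, (α k : ℝ) ≤ δ * (α (k + 1) : ℝ)) (p : ℕ) :
    ∃ B : ℝ, 0 ≤ B ∧ ∀ V M : ℕ, 1 ≤ M → ∀ c : ℕ → ℂ, (∀ k, ‖c k‖ = 1) →
      ∫ θ in (0 : ℝ)..1, ‖∑ k ∈ Finset.Icc (V + 1) (2 * V),
        c k * eTwoPi (-(α k * M * θ))‖ ^ (2 * p) ≤ B * (V : ℝ) ^ p := by
  obtain ⟨k₀, hk₀⟩ := hα (1 / (p + 1)) (by positivity)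
  have hgrow : ∀ k ≥ k₀, (p + 1) * α k ≤ α (k + 1) := by
    intro k hk
    have h := hk₀ k hk
    have hp : (0 : ℝ) < p + 1 := by positivity
    rw [one_div, ← div_eq_inv_mul, le_div_iff₀ hp, mul_comm] at h
    exact_mod_cast h
  refine ⟨p.factorial + (k₀ : ℝ) ^ p, by positivity, fun V M hM c hc => ?_⟩
  have hIco : Finset.Icc (V + 1) (2 * V) = Finset.Ico (V + 1) (2 * V + 1) := by
    ext k
    simp only [Finset.mem_Icc, Finset.mem_Ico]
    omega
  by_cases hV : k₀ ≤ V
  · have h := moment_bound_s6 (p := p) (N := V + 1) (n := 2 * V + 1) hαpos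
      (fun k hk => hgrow k (by omega)) (by omega) c hc hM
    have hcard : 2 * V + 1 - (V + 1) = V := by omega
    rw [hcard, ← hIco] at h
    refine h.trans ?_
    gcongr
    exact le_add_of_nonneg_right (by positivity)
  · have hpt : ∀ θ : ℝ, ‖∑ k ∈ Finset.Icc (V + 1) (2 * V),
        c k * eTwoPi (-(α k * M * θ))‖ ^ (2 * p) ≤ (V : ℝ) ^ (2 * p) := by
      intro θ
      refine pow_le_pow_left₀ (norm_nonneg _) ?_ _
      refine (norm_sum_le _ _).trans ?_
      have hcard : 2 * V + 1 - (V + 1) = V := by omega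
      simp [hc, norm_eTwoPi, hcard]
    have hcont : Continuous fun θ : ℝ => ‖∑ k ∈ Finset.Icc (V + 1) (2 * V),
        c k * eTwoPi (-(α k * M * θ))‖ ^ (2 * p) :=
      (continuous_finsetSum _ fun k _ => continuous_const.mul
        (continuous_eTwoPi.comp (by fun_prop))).norm.pow _
    have h := intervalIntegral.integral_mono_on (zero_le_one' ℝ) (hcont.intervalIntegrable 0 1)
      ((continuous_const (y := (V : ℝ) ^ (2 * p))).intervalIntegrable (μ := MeasureTheory.volume)
        0 1) (fun θ _ => hpt θ)
    refine h.trans ?_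
    have hVk : (V : ℝ) ≤ k₀ := by exact_mod_cast (not_le.mp hV).le
    simp only [intervalIntegral.integral_const, sub_zero, one_smul]
    rw [two_mul, pow_add]
    gcongr
    calc (V : ℝ) ^ p ≤ (k₀ : ℝ) ^ p := by gcongr
      _ ≤ _ := le_add_of_nonneg_left (by positivity)

/-- Almost everywhere bound for the sums with rational linear phase `k a / b`, indexed by
polynomially many parameters. -/
lemma ae_bound_rational_phase (α : ℕ → ℕ) (hαpos : ∀ k, 0 < α k)
    (hα : ∀ δ : ℝ, 0 < δ → ∃ k₀ : ℕ, ∀ k ≥ k₀, (α k : ℝ) ≤ δ * (α (k + 1) : ℝ)) (p D : ℕ) :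
    ∀ᵐ θ ∂(MeasureTheory.volume.restrict (Set.Icc (0 : ℝ) 1)), ∃ C : ℝ, ∀ V : ℕ, 1 ≤ V →
      ∀ M ∈ Finset.Icc 1 (D * V), ∀ b ∈ Finset.Icc 1 (V ^ 2), ∀ a ∈ Finset.range (V ^ 2),
        ‖∑ k ∈ Finset.Icc (V + 1) (2 * V),
          eTwoPi (k * (a / b)) * eTwoPi (-(α k * M * θ))‖ ^ (2 * p) ≤ C * (V : ℝ) ^ (p + 7) := by
  obtain ⟨B, hB0, hB⟩ := exists_moment_const α hαpos hα p
  set g : ℕ → ℕ → ℕ → ℕ → ℝ → ℝ := fun V M b a θ => ‖∑ k ∈ Finset.Icc (V + 1) (2 * V),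
    eTwoPi (k * (a / b)) * eTwoPi (-(α k * M * θ))‖ ^ (2 * p) with hg
  have hg0 : ∀ V M b a θ, 0 ≤ g V M b a θ := fun V M b a θ => by positivity
  have hgc : ∀ V M b a, Continuous (g V M b a) := fun V M b a =>
    (continuous_finsetSum _ fun k _ => continuous_const.mul
      (continuous_eTwoPi.comp (by fun_prop))).norm.pow _
  -- One sum over all parameters replaces a union bound; there are at most `D V ^ 5` of them.
  set P : ℕ → Finset (ℕ × ℕ × ℕ) := fun V =>
    Finset.Icc 1 (D * V) ×ˢ Finset.Icc 1 (V ^ 2) ×ˢ Finset.range (V ^ 2) with hP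
  set f : ℕ → ℝ → ℝ := fun V θ => (∑ t ∈ P V, g V t.1 t.2.1 t.2.2 θ) / (V : ℝ) ^ (p + 7) with hf
  have hae := ae_bounded_of_summable_integral f
    (fun V => (continuous_finsetSum _ fun t _ => hgc _ _ _ _).div_const _)
    (fun V θ => div_nonneg (Finset.sum_nonneg fun t _ => hg0 _ _ _ _ _) (by positivity))
    (fun V => D * B * (1 / (V : ℝ) ^ 2))
    ((Real.summable_one_div_nat_pow.mpr (by norm_num)).mul_left _) (fun V => by
      simp only [hf]
      rw [intervalIntegral.integral_div, intervalIntegral.integral_finsetSum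
        fun t _ => (hgc V t.1 t.2.1 t.2.2).intervalIntegrable _ _]
      rcases Nat.eq_zero_or_pos V with rfl | hV
      · simp [hP]
      have hle : ∑ t ∈ P V, ∫ θ in (0 : ℝ)..1, g V t.1 t.2.1 t.2.2 θ ≤
          ∑ t ∈ P V, B * (V : ℝ) ^ p := by
        refine Finset.sum_le_sum fun t ht => ?_
        simp only [hP, Finset.mem_product, Finset.mem_Icc] at ht
        exact hB V t.1 ht.1.1 _ fun k => norm_eTwoPi _
      have hV' : (0 : ℝ) < V := by exact_mod_cast hV
      rw [div_le_iff₀ (by positivity)]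
      refine hle.trans (le_of_eq ?_)
      simp only [hP, Finset.sum_const, Finset.card_product, Nat.card_Icc, Finset.card_range,
        nsmul_eq_mul, Nat.add_sub_cancel]
      push_cast
      field_simp
      ring)
  filter_upwards [hae] with θ ⟨C, hC⟩
  refine ⟨C, fun V hV M hM b hb a ha => ?_⟩
  have hV' : (0 : ℝ) < V := by exact_mod_cast hV
  have h1 := hC V
  simp only [hf] at h1
  rw [div_le_iff₀ (by positivity)] at h1
  refine le_trans ?_ h1
  exact Finset.single_le_sum (f := fun t : ℕ × ℕ × ℕ => g V t.1 t.2.1 t.2.2 θ)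
    (fun t _ => hg0 _ _ _ _ _) (a := (M, b, a))
    (Finset.mem_product.mpr ⟨hM, Finset.mem_product.mpr ⟨hb, ha⟩⟩)

/-! ### Reduction to rational phases -/

lemma denVec_pos {d : ℕ} (q : Fin d → ℚ) : 0 < denVec q := by
  rw [Nat.pos_iff_ne_zero, denVec, Ne, Finset.lcm_eq_zero_iff]
  simp

/-- The number `m · q` has denominator dividing `denVec q`. -/
lemma exists_dot_eq_div {d : ℕ} (m : Fin d → ℤ) (q : Fin d → ℚ) :
    ∃ t : ℤ, ∑ i, (m i : ℝ) * (q i : ℝ) = t / denVec q := by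
  have hb : (denVec q : ℝ) ≠ 0 := by exact_mod_cast (denVec_pos q).ne'
  have h : ∀ i, ∃ t : ℤ, (q i : ℝ) = t / denVec q := by
    intro i
    obtain ⟨e, he⟩ : (q i).den ∣ denVec q := Finset.dvd_lcm (Finset.mem_univ i)
    refine ⟨(q i).num * e, ?_⟩
    have he0 : (e : ℝ) ≠ 0 := by
      rintro h0
      apply hb
      rw [he]
      push_cast
      rw [h0, mul_zero]
    rw [he, Rat.cast_def]
    push_cast
    rw [mul_div_mul_right _ _ he0]
  choose t ht using h
  refine ⟨∑ i, m i * t i, ?_⟩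
  push_cast
  rw [Finset.sum_div]
  exact Finset.sum_congr rfl fun i _ => by rw [ht, mul_div_assoc]

/-- for any sequence of positive integers with `α_k = o(α_{k+1})`,
for almost every `θ ∈ [0,1]` the exponential sums
`∑_{k=V+1}^{2V} e(m·(k q - α_k θ 1_d))` are `≤ C(θ) V^{1/2+η}` uniformly in
`V`, `m ∈ ⟦0, K V⟧^d \ {0}` and `q ∈ D₁^{(d)}(V)`. -/
theorem exponential_sum_ae_bound (d : ℕ) (hd : 1 ≤ d) (K η : ℝ)
    (hK : 0 < K) (hη : 0 < η) (α : ℕ → ℕ) (hαpos : ∀ k, 0 < α k)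
    (hα : ∀ δ : ℝ, 0 < δ → ∃ k₀ : ℕ, ∀ k ≥ k₀, (α k : ℝ) ≤ δ * (α (k + 1) : ℝ)) :
    ∀ᵐ θ ∂(MeasureTheory.volume.restrict (Set.Icc (0 : ℝ) 1)),
      ∃ C : ℝ, 0 < C ∧
        ∀ V : ℕ, 1 ≤ V →
        ∀ m : Fin d → ℤ, (∀ i, 0 ≤ m i ∧ (m i : ℝ) ≤ K * V) → m ≠ 0 →
        ∀ q ∈ D1 d (V : ℝ),
          ‖∑ k ∈ Finset.Icc (V + 1) (2 * V),
              eTwoPi (∑ i, (m i : ℝ) * ((k : ℝ) * (q i : ℝ) - (α k : ℝ) * θ))‖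
            ≤ C * (V : ℝ) ^ ((1 : ℝ) / 2 + η) := by
  obtain ⟨p, hp⟩ := exists_nat_gt (7 / (2 * η))
  have hp0 : (0 : ℝ) < p := lt_trans (by positivity) hp
  have hp1 : p ≠ 0 := by
    rintro rfl
    simp at hp0
  have hpη : (7 : ℝ) ≤ 2 * p * η := by
    rw [div_lt_iff₀ (by positivity)] at hp
    linarith
  obtain ⟨D, hD⟩ := exists_nat_ge ((d : ℝ) * K)
  filter_upwards [ae_bound_rational_phase α hαpos hα p D] with θ ⟨C, hC⟩
  refine ⟨max 1 C, by positivity, fun V hV m hm hm0 q hq => ?_⟩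
  have hV1 : (1 : ℝ) ≤ V := by exact_mod_cast hV
  have hV0 : (0 : ℝ) < V := by linarith
  obtain ⟨M, hM⟩ : ∃ M : ℕ, (M : ℤ) = ∑ i, m i :=
    ⟨(∑ i, m i).toNat, Int.toNat_of_nonneg (Finset.sum_nonneg fun i _ => (hm i).1)⟩
  have hMr : (M : ℝ) = ∑ i, (m i : ℝ) := by exact_mod_cast congrArg (Int.cast : ℤ → ℝ) hM
  have hM1 : 1 ≤ M := by
    obtain ⟨i, hi⟩ := Function.ne_iff.mp hm0
    have h1 : m i ≤ ∑ i, m i :=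
      Finset.single_le_sum (fun i _ => (hm i).1) (Finset.mem_univ i)
    have h2 := (hm i).1
    simp only [Pi.zero_apply] at hi
    omega
  have hMD : M ≤ D * V := by
    have h1 : (M : ℝ) ≤ ∑ _i : Fin d, K * V := by
      rw [hMr]
      exact Finset.sum_le_sum fun i _ => (hm i).2
    have h2 : (M : ℝ) ≤ D * V := by
      refine h1.trans ?_
      rw [Finset.sum_const, Finset.card_univ, Fintype.card_fin, nsmul_eq_mul, ← mul_assoc]
      gcongr
    exact_mod_cast h2
  have hb1 : 0 < denVec q := denVec_pos q
  have hbV : denVec q ≤ V ^ 2 := by exact_mod_cast hq.2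
  obtain ⟨t, ht⟩ := exists_dot_eq_div m q
  set b := denVec q with hb
  have hbr : (b : ℝ) ≠ 0 := by exact_mod_cast hb1.ne'
  have hbz : (b : ℤ) ≠ 0 := by exact_mod_cast hb1.ne'
  -- Only the residue `a` of `t` modulo `b` matters, since `k` is an integer.
  obtain ⟨a, ha⟩ : ∃ a : ℕ, (a : ℤ) = t % b := ⟨_, Int.toNat_of_nonneg (Int.emod_nonneg t hbz)⟩
  have hab : a < b := by
    have := Int.emod_lt_of_pos t (by exact_mod_cast hb1 : (0 : ℤ) < b)
    omega
  have htab : (t : ℝ) = a + b * ((t / b : ℤ) : ℝ) := by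
    have := Int.emod_add_mul_ediv t b
    rw [← ha] at this
    exact_mod_cast this.symm
  have hterm : ∀ k : ℕ, eTwoPi (∑ i, (m i : ℝ) * ((k : ℝ) * (q i : ℝ) - (α k : ℝ) * θ)) =
      eTwoPi (k * (a / b)) * eTwoPi (-(α k * M * θ)) := by
    intro k
    have h1 : ∑ i, (m i : ℝ) * ((k : ℝ) * (q i : ℝ) - (α k : ℝ) * θ) =
        (k * (a / b) + -(α k * M * θ)) + ((k * (t / b) : ℤ) : ℝ) := by
      calc ∑ i, (m i : ℝ) * ((k : ℝ) * (q i : ℝ) - (α k : ℝ) * θ)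
          = k * ∑ i, (m i : ℝ) * (q i : ℝ) - α k * θ * ∑ i, (m i : ℝ) := by
            rw [Finset.mul_sum, Finset.mul_sum, ← Finset.sum_sub_distrib]
            exact Finset.sum_congr rfl fun i _ => by ring
        _ = _ := by
            rw [ht, ← hMr, htab]
            push_cast
            field_simp
            ring
    rw [h1, eTwoPi_add, eTwoPi_int, mul_one, eTwoPi_add]
  simp_rw [hterm]
  have hmain := hC V hV M (Finset.mem_Icc.mpr ⟨hM1, hMD⟩) b (Finset.mem_Icc.mpr ⟨hb1, hbV⟩) a
    (Finset.mem_range.mpr (lt_of_lt_of_le hab hbV))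
  refine le_of_pow_le_pow_left₀ (n := 2 * p) (by omega) (by positivity) (hmain.trans ?_)
  rw [mul_pow]
  have hC1 : C ≤ max 1 C ^ (2 * p) :=
    (le_max_right 1 C).trans (le_self_pow₀ (le_max_left 1 C) (by omega))
  have hVp : (V : ℝ) ^ (p + 7) ≤ ((V : ℝ) ^ ((1 : ℝ) / 2 + η)) ^ (2 * p) := by
    rw [← Real.rpow_natCast, ← Real.rpow_natCast, ← Real.rpow_mul hV0.le]
    refine Real.rpow_le_rpow_of_exponent_le hV1 ?_
    push_cast
    nlinarith
  gcongr
end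

section
/- Let d ≥ 1 and r ≥ 1 be integers and let (α_k)_{k≥0} be a sequence of positive integers with α_k = o(α_{k+1}) as k → ∞. Let m ∈ ℤ^d with m·1_d ≠ 0 and let q ∈ ℝ^d. Then for all sufficiently large integers V (depending on r and the sequence), ∫₀¹ |Σ_{k=V+1}^{2V} e(m·(k·q − α_k·θ·1_d))|^{2r} dθ ≤ r!·V^r. -/
/-!
Expanding the `r`-th power of the sum over tuples `f : Fin r → {V + 1, …, 2V}` turns the integrand
into the squared modulus of a trigonometric polynomial with unimodular coefficients and the integer
frequencies `-(∑ i, m i) * ∑ j, α (f j)`. Orthogonality of characters on `[0, 1]` therefore bounds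
the integral by the number of pairs `(f, g)` with `∑ j, α (f j) = ∑ j, α (g j)`
(`integral_normSq_le`).

For large `k` the growth condition gives `r * α k < α (k + 1)`, so that a sum of at most `r` terms
`α k` with large indices determines the multiset of indices: the largest indices on both sides must
agree, and one may cancel them (`multiset_eq_of_sum_eq`). Hence `f = g ∘ σ` for a permutation `σ`,
which leaves at most `r! * V ^ r` pairs.
-/

open scoped BigOperators

/-- Under `r`-fold growth from `K` on, a sum of `α` over at most `r` indices in `[K, a]` is
smaller than any sum over a multiset with some index `b > a`. -/
lemma multiset_sum_lt {α : ℕ → ℕ} {r K : ℕ} (hr : 1 ≤ r) (hα : ∀ k ≥ K, r * α k < α (k + 1))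
    {s t : Multiset ℕ} (hs : s.card ≤ r) {a b : ℕ} (hsa : ∀ x ∈ s, x ≤ a)
    (hsK : ∀ x ∈ s, K ≤ x) (hb : b ∈ t) (haK : K ≤ a) (hab : a < b) :
    (s.map α).sum < (t.map α).sum := by
  have step : ∀ k ≥ K, α k ≤ α (k + 1) := fun k hk => by
    have := hα k hk
    nlinarith [Nat.zero_le (α k)]
  have mono : ∀ x y, K ≤ x → x ≤ y → α x ≤ α y := by
    intro x y hx hxy
    induction y, hxy using Nat.le_induction with
    | base => exact le_rfl
    | succ y hy ih => exact ih.trans (step y (hx.trans hy))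
  calc (s.map α).sum ≤ (s.map α).card • α a := by
        refine Multiset.sum_le_card_nsmul _ _ fun x hx => ?_
        obtain ⟨y, hy, rfl⟩ := Multiset.mem_map.1 hx
        exact mono y a (hsK y hy) (hsa y hy)
    _ ≤ r * α a := by
        rw [Multiset.card_map, smul_eq_mul]
        exact Nat.mul_le_mul_right _ hs
    _ < α (a + 1) := hα a haK
    _ ≤ α b := mono _ _ (by omega) hab
    _ ≤ (t.map α).sum :=
        Multiset.single_le_sum (by simp) _ (Multiset.mem_map_of_mem α hb)

lemma exists_max_mem {s : Multiset ℕ} (hs : s ≠ 0) : ∃ a ∈ s, ∀ x ∈ s, x ≤ a := by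
  obtain ⟨x, hx⟩ := Multiset.exists_mem_of_ne_zero hs
  obtain ⟨a, ha, hmax⟩ := s.toFinset.exists_max_image id ⟨x, Multiset.mem_toFinset.2 hx⟩
  exact ⟨a, Multiset.mem_toFinset.1 ha, fun y hy => hmax y (Multiset.mem_toFinset.2 hy)⟩

/-- Sums of at most `r` terms of a sequence growing by a factor more than `r` determine the
multiset of indices. -/
lemma multiset_eq_of_sum_eq {α : ℕ → ℕ} {r K : ℕ} (hr : 1 ≤ r)
    (hα : ∀ k ≥ K, r * α k < α (k + 1)) (n : ℕ) (hn : n ≤ r) :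
    ∀ s t : Multiset ℕ, s.card = n → t.card = n → (∀ x ∈ s, K ≤ x) → (∀ x ∈ t, K ≤ x) →
      (s.map α).sum = (t.map α).sum → s = t := by
  induction n with
  | zero =>
    intro s t hs ht _ _ _
    rw [Multiset.card_eq_zero.1 hs, Multiset.card_eq_zero.1 ht]
  | succ n ih =>
    intro s t hs ht hsK htK h
    obtain ⟨a, ha, hsa⟩ := exists_max_mem (s := s) (by rintro rfl; simp at hs)
    obtain ⟨b, hb, htb⟩ := exists_max_mem (s := t) (by rintro rfl; simp at ht)
    have hab : a = b := by
      rcases lt_trichotomy a b with hlt | heq | hlt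
      · exact absurd h (multiset_sum_lt hr hα (hs ▸ hn) hsa hsK hb (hsK a ha) hlt).ne
      · exact heq
      · exact absurd h (multiset_sum_lt hr hα (ht ▸ hn) htb htK ha (htK b hb) hlt).ne'
    subst hab
    obtain ⟨s, rfl⟩ := Multiset.exists_cons_of_mem ha
    obtain ⟨t, rfl⟩ := Multiset.exists_cons_of_mem hb
    rw [Multiset.card_cons] at hs ht
    rw [ih (by omega) s t (by omega) (by omega)
      (fun x hx => hsK x (Multiset.mem_cons_of_mem hx))
      (fun x hx => htK x (Multiset.mem_cons_of_mem hx)) (by simpa using h)]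

lemma integral_character (n : ℤ) :
    ∫ θ in (0 : ℝ)..1, Complex.exp (2 * Real.pi * Complex.I * n * θ) = if n = 0 then 1 else 0 := by
  split_ifs with h
  · simp [h]
  · have hc : (2 * Real.pi * Complex.I * n : ℂ) ≠ 0 := by
      simp [Real.pi_ne_zero, h]
    rw [integral_exp_mul_complex hc]
    have : (2 * Real.pi * Complex.I * n : ℂ) = n * (2 * Real.pi * Complex.I) := by ring
    simp [this, Complex.exp_int_mul_two_pi_mul_I]

/-- The mean square of a trigonometric polynomial with coefficients of modulus at most `1` is at
most the number of pairs of terms with equal frequency. -/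
lemma integral_normSq_le {ι : Type*} [DecidableEq ι] (s : Finset ι) (c : ι → ℂ)
    (hc : ∀ i, ‖c i‖ ≤ 1) (n : ι → ℤ) :
    ∫ θ in (0 : ℝ)..1, ‖∑ i ∈ s, c i * Complex.exp (2 * Real.pi * Complex.I * n i * θ)‖ ^ 2
      ≤ (((s ×ˢ s).filter fun p => n p.1 = n p.2).card : ℝ) := by
  have key : ((∫ θ in (0 : ℝ)..1,
      ‖∑ i ∈ s, c i * Complex.exp (2 * Real.pi * Complex.I * n i * θ)‖ ^ 2 : ℝ) : ℂ)
      = ∑ p ∈ s ×ˢ s, c p.1 * (starRingEnd ℂ) (c p.2) * if n p.1 = n p.2 then 1 else 0 := by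
    rw [← intervalIntegral.integral_ofReal]
    have expand : ∀ θ : ℝ,
        ((‖∑ i ∈ s, c i * Complex.exp (2 * Real.pi * Complex.I * n i * θ)‖ ^ 2 : ℝ) : ℂ)
        = ∑ p ∈ s ×ˢ s, c p.1 * (starRingEnd ℂ) (c p.2) *
            Complex.exp (2 * Real.pi * Complex.I * ((n p.1 - n p.2 : ℤ) : ℂ) * θ) := by
      intro θ
      rw [Complex.ofReal_pow, ← Complex.mul_conj', map_sum, Finset.sum_mul_sum,
        Finset.sum_product]
      refine Finset.sum_congr rfl fun i _ => Finset.sum_congr rfl fun j _ => ?_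
      rw [map_mul, ← Complex.exp_conj, mul_mul_mul_comm, ← Complex.exp_add]
      congr 2
      simp only [map_mul, Complex.conj_ofReal, Complex.conj_I, map_intCast, map_ofNat]
      push_cast
      ring
    simp_rw [expand]
    rw [intervalIntegral.integral_finsetSum
      (fun p _ => Continuous.intervalIntegrable (by fun_prop) _ _)]
    refine Finset.sum_congr rfl fun p _ => ?_
    rw [intervalIntegral.integral_const_mul, integral_character]
    simp only [sub_eq_zero]
  refine (le_abs_self _).trans ?_
  rw [← Real.norm_eq_abs, ← Complex.norm_real, key]
  refine (norm_sum_le _ _).trans ?_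
  rw [Finset.card_filter, Nat.cast_sum]
  refine Finset.sum_le_sum fun p _ => ?_
  split_ifs
  · simpa using mul_le_one₀ (hc p.1) (norm_nonneg _) (hc p.2)
  · simp

lemma exists_perm_of_map_eq {ι β : Type*} [Fintype ι] [DecidableEq β] (f g : ι → β)
    (h : Finset.univ.val.map f = Finset.univ.val.map g) :
    ∃ σ : Equiv.Perm ι, ∀ i, g (σ i) = f i := by
  have hcard : ∀ b, Fintype.card {i // f i = b} = Fintype.card {i // g i = b} := by
    intro b
    have := congrArg (Multiset.count b) h
    rw [Multiset.count_map, Multiset.count_map] at this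
    rw [Fintype.card_subtype, Fintype.card_subtype]
    simp only [eq_comm (a := b)] at this
    exact this
  exact ⟨Equiv.ofFiberEquiv fun b => Fintype.equivOfCardEq (hcard b),
    fun i => Equiv.ofFiberEquiv_map _ i⟩

/-- If `α` grows by a factor more than `r` from `K` on, then `r`-tuples in `A` with equal `α`-sums
are permutations of each other, so a pair of them is determined by one tuple and a permutation. -/
lemma card_pairs_le {r : ℕ} {α : ℕ → ℕ} {K : ℕ} (hr : 1 ≤ r)
    (hα : ∀ k ≥ K, r * α k < α (k + 1)) (A : Finset ℕ) (hA : ∀ x ∈ A, K ≤ x)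
    (P : Finset ((Fin r → ℕ) × (Fin r → ℕ)))
    (hP : ∀ p ∈ P, (∀ j, p.1 j ∈ A) ∧ (∀ j, p.2 j ∈ A) ∧ ∑ j, α (p.1 j) = ∑ j, α (p.2 j)) :
    P.card ≤ r.factorial * A.card ^ r := by
  classical
  let Q : Finset ((Fin r → ℕ) × Equiv.Perm (Fin r)) :=
    (Fintype.piFinset fun _ : Fin r => A) ×ˢ Finset.univ
  have hsub : P ⊆ Q.image fun x => (x.1 ∘ x.2, x.1) := by
    rintro ⟨f, g⟩ hp
    obtain ⟨hf, hg, h⟩ := hP _ hp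
    have hmul : Finset.univ.val.map f = Finset.univ.val.map g := by
      refine multiset_eq_of_sum_eq hr hα r le_rfl _ _ (by simp) (by simp) ?_ ?_ ?_
      · intro x hx
        obtain ⟨j, -, rfl⟩ := Multiset.mem_map.1 hx
        exact hA _ (hf j)
      · intro x hx
        obtain ⟨j, -, rfl⟩ := Multiset.mem_map.1 hx
        exact hA _ (hg j)
      · rw [Multiset.map_map, Multiset.map_map]
        exact h
    obtain ⟨σ, hσ⟩ := exists_perm_of_map_eq f g hmul
    refine Finset.mem_image.2 ⟨(g, σ), ?_, Prod.ext (funext hσ) rfl⟩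
    simpa [Q, Fintype.mem_piFinset] using hg
  refine (Finset.card_le_card hsub).trans (Finset.card_image_le.trans (le_of_eq ?_))
  simp [Q, Finset.card_product, Fintype.card_perm, mul_comm]

/-- moment bound: for a sequence of positive integers with
`α_k = o(α_{k+1})`, `m ∈ ℤ^d` with `m·1_d ≠ 0` and `q ∈ ℝ^d`, for all large
enough `V`,
`∫₀¹ |∑_{k=V+1}^{2V} e(m·(k q - α_k θ 1_d))|^{2r} dθ ≤ r! V^r`. -/
theorem moment_bound (d r : ℕ) (hd : 1 ≤ d) (hr : 1 ≤ r) (α : ℕ → ℕ)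
    (hαpos : ∀ k, 0 < α k)
    (hα : ∀ δ : ℝ, 0 < δ → ∃ k₀ : ℕ, ∀ k ≥ k₀, (α k : ℝ) ≤ δ * (α (k + 1) : ℝ))
    (m : Fin d → ℤ) (hm : (∑ i, m i) ≠ 0) (q : Fin d → ℝ) :
    ∃ V₀ : ℕ, ∀ V ≥ V₀,
      (∫ θ in (0 : ℝ)..1,
          ‖∑ k ∈ Finset.Icc (V + 1) (2 * V),
              eTwoPi (∑ i, (m i : ℝ) * ((k : ℝ) * q i - (α k : ℝ) * θ))‖ ^ (2 * r))
        ≤ (Nat.factorial r : ℝ) * (V : ℝ) ^ r := by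
  -- `1 / (r + 1)` rather than `1 / r` makes the growth inequality strict.
  obtain ⟨K, hK⟩ := hα (1 / (r + 1)) (by positivity)
  have hgrow : ∀ k ≥ K, r * α k < α (k + 1) := by
    intro k hk
    have h := hK k hk
    rw [one_div_mul_eq_div, le_div_iff₀ (by positivity)] at h
    have h' : α k * (r + 1) ≤ α (k + 1) := by exact_mod_cast h
    nlinarith [hαpos k]
  refine ⟨K, fun V hV => ?_⟩
  set A := Finset.Icc (V + 1) (2 * V) with hAdef
  set M : ℤ := ∑ i, m i with hM
  let a : ℕ → ℂ := fun k => eTwoPi (∑ i, (m i : ℝ) * ((k : ℝ) * q i))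
  have ha : ∀ k, ‖a k‖ = 1 := fun k => by
    simp only [a, eTwoPi]
    rw [Complex.norm_exp]
    simp
  have hterm : ∀ (k : ℕ) (θ : ℝ), eTwoPi (∑ i, (m i : ℝ) * ((k : ℝ) * q i - (α k : ℝ) * θ))
      = a k * Complex.exp (2 * Real.pi * Complex.I * ((-M * α k : ℤ) : ℂ) * θ) := by
    intro k θ
    have hsum : (∑ i, (m i : ℝ) * ((k : ℝ) * q i - (α k : ℝ) * θ))
        = (∑ i, (m i : ℝ) * ((k : ℝ) * q i)) - M * (α k * θ) := by
      simp only [hM, mul_sub, Finset.sum_sub_distrib, Int.cast_sum, Finset.sum_mul]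
    simp only [a, eTwoPi]
    rw [hsum, ← Complex.exp_add]
    congr 1
    push_cast
    ring
  let c : (Fin r → ℕ) → ℂ := fun f => ∏ j, a (f j)
  let n : (Fin r → ℕ) → ℤ := fun f => -M * ∑ j, (α (f j) : ℤ)
  have hpow : ∀ θ : ℝ,
      ‖∑ k ∈ A, eTwoPi (∑ i, (m i : ℝ) * ((k : ℝ) * q i - (α k : ℝ) * θ))‖ ^ (2 * r)
      = ‖∑ f ∈ Fintype.piFinset (fun _ : Fin r => A),
          c f * Complex.exp (2 * Real.pi * Complex.I * n f * θ)‖ ^ 2 := by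
    intro θ
    rw [mul_comm 2 r, pow_mul, ← norm_pow]
    congr 2
    have := Finset.prod_univ_sum (fun _ : Fin r => A) (fun _ k =>
      eTwoPi (∑ i, (m i : ℝ) * ((k : ℝ) * q i - (α k : ℝ) * θ)))
    rw [Finset.prod_const, Finset.card_univ, Fintype.card_fin] at this
    rw [this]
    refine Finset.sum_congr rfl fun f _ => ?_
    simp only [hterm, Finset.prod_mul_distrib, c, n]
    rw [← Complex.exp_sum]
    congr 2
    push_cast
    simp only [Finset.mul_sum, Finset.sum_mul]
  simp_rw [hpow]
  refine (integral_normSq_le _ c (fun f => by simp [c, ha]) n).trans ?_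
  have hcard := card_pairs_le hr hgrow A (fun x hx => by
    have := Finset.mem_Icc.1 hx
    omega) (((Fintype.piFinset fun _ : Fin r => A) ×ˢ Fintype.piFinset fun _ : Fin r => A).filter
      fun p => n p.1 = n p.2) (by
    rintro ⟨f, g⟩ hp
    rw [Finset.mem_filter, Finset.mem_product, Fintype.mem_piFinset, Fintype.mem_piFinset] at hp
    refine ⟨hp.1.1, hp.1.2, ?_⟩
    have := mul_left_cancel₀ (neg_ne_zero.2 hm) hp.2
    exact_mod_cast this)
  have hA : A.card = V := by
    rw [hAdef, Nat.card_Icc]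
    omega
  rw [hA] at hcard
  exact_mod_cast hcard
end
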